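/- For all real numbers x ≥ 0, 0 < p < 1, and u, the moment generating function of the continuous binomial distribution satisfies (∫_{0}^{x} e^{us} {x choose s} p^s (1−p)^{x−s} ds) / (∫_{0}^{x} {x choose s} p^s (1−p)^{x−s} ds) = e^{ux/2} · φ_{x,p}(u)/φ_{x,p}(0), where φ_{x,p}(u) = cosh((x/2)√(4 + (u+L)²)) − cosh((x/2)(u+L)) + (2/√(4 + (u+L)²)) sinh((x/2)√(4 + (u+L)²)) and L = log(p/(1−p)). -/

import Mathlib

/-- The continuous binomial coefficient `{x choose s}`. -/
noncomputable def cbinom (x s : ℝ) : ℝ :=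
  ∑' n : ℕ, (s * (x - s)) ^ n *
    (2 / ((n.factorial : ℝ)) ^ 2 + x / ((n.factorial : ℝ) * ((n + 1).factorial : ℝ)))

/-- The auxiliary function `φ_{x,p}(u)` appearing in the moment generating function of
the continuous binomial distribution. -/
noncomputable def phiCB (x p u : ℝ) : ℝ :=
  Real.cosh (x / 2 * Real.sqrt (4 + (u + Real.log (p / (1 - p))) ^ 2)) -
    Real.cosh (x / 2 * (u + Real.log (p / (1 - p)))) +
    2 / Real.sqrt (4 + (u + Real.log (p / (1 - p))) ^ 2) *
      Real.sinh (x / 2 * Real.sqrt (4 + (u + Real.log (p / (1 - p))) ^ 2))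

/-!
Up to the factor `(1 - p) ^ x` the weight `p ^ s * (1 - p) ^ (x - s)` is an exponential in `s`, so
only `∫ s in 0..x, exp (v * s) * cbinom x s` has to be evaluated. With `a = x / 2` and `s = a + t`
the coefficient is `2 C₀(a² - t²) + 2 a C₁(a² - t²)` in terms of the entire functions
`C_ν(y) = ∑ yⁿ / (n! (n + ν)!)`; it is even in `t`, which turns `exp (v * t)` into `cosh (v * t)`.
Expand `C_ν` and `cosh` and integrate the monomials `t ^ (2 k) * (a² - t²) ^ n`. By the binomial
theorem the terms with `n + k = N` add up, apart from a constant factor, to the `N`-th term of the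
series of `sinh (a * r)` (for `ν = 0`) and of `cosh (a * r) - cosh (a * v)` (for `ν = 1`), where
`r ^ 2 = 4 + v ^ 2`.
-/

open Finset Nat MeasureTheory

lemma hasSum_sum_antidiagonal {A α : Type*} [AddCommMonoid A] [HasAntidiagonal A]
    [AddCommMonoid α] [TopologicalSpace α] [ContinuousAdd α] [RegularSpace α]
    {f : A × A → α} {s : α} (hf : HasSum f s) :
    HasSum (fun n ↦ ∑ q ∈ antidiagonal n, f q) s :=
  (HasAntidiagonal.sigmaAntidiagonalEquivProd.hasSum_iff.mpr hf).sigma fun n ↦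
    (antidiagonal n).hasSum f

lemma sum_antidiagonal_choose_succ_mul_pow {R : Type*} [CommRing R] (x y : R) (N : ℕ) :
    ∑ q ∈ antidiagonal N, ((N + 1).choose (q.1 + 1) : R) * (x ^ (q.1 + 1) * y ^ q.2) =
      (x + y) ^ (N + 1) - y ^ (N + 1) := by
  rw [(Commute.all x y).add_pow', Nat.sum_antidiagonal_succ]
  simp only [choose_zero_right, pow_zero, one_mul, one_smul, nsmul_eq_mul, add_sub_cancel_left]

lemma hasSum_intervalIntegral_mul {ι κ : Type*} [Countable ι] [Countable κ]
    {f : ι → ℝ → ℝ} {g : κ → ℝ → ℝ} {F G : ℝ → ℝ} {A : ι → ℝ} {B : κ → ℝ} {a b : ℝ}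
    (hf : ∀ i, Continuous (f i)) (hg : ∀ k, Continuous (g k))
    (hfA : ∀ i, ∀ t ∈ Set.uIcc a b, |f i t| ≤ A i) (hgB : ∀ k, ∀ t ∈ Set.uIcc a b, |g k t| ≤ B k)
    (hA : Summable A) (hB : Summable B)
    (hF : ∀ t ∈ Set.uIcc a b, HasSum (f · t) (F t))
    (hG : ∀ t ∈ Set.uIcc a b, HasSum (g · t) (G t)) :
    HasSum (fun q : ι × κ ↦ ∫ t in a..b, f q.1 t * g q.2 t) (∫ t in a..b, F t * G t) := by
  have hA0 (i : ι) : 0 ≤ A i := (abs_nonneg _).trans (hfA i a Set.left_mem_uIcc)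
  have hB0 (k : κ) : 0 ≤ B k := (abs_nonneg _).trans (hgB k a Set.left_mem_uIcc)
  have hAB : Summable fun q : ι × κ ↦ A q.1 * B q.2 := hA.mul_of_nonneg hB hA0 hB0
  have hbound (q : ι × κ) (t : ℝ) (ht : t ∈ Set.uIcc a b) :
      ‖f q.1 t * g q.2 t‖ ≤ A q.1 * B q.2 := by
    rw [Real.norm_eq_abs, abs_mul]
    exact mul_le_mul (hfA _ t ht) (hgB _ t ht) (abs_nonneg _) (hA0 _)
  refine intervalIntegral.hasSum_integral_of_dominated_convergence (fun q _ ↦ A q.1 * B q.2)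
    (fun q ↦ ((hf q.1).mul (hg q.2)).aestronglyMeasurable) (fun q ↦ ?_)
    (.of_forall fun _ _ ↦ hAB) intervalIntegrable_const (.of_forall fun t ht ↦ ?_)
  · exact .of_forall fun t ht ↦ hbound q t (Set.uIoc_subset_uIcc ht)
  · have ht' := Set.uIoc_subset_uIcc ht
    exact (hF t ht').mul (hG t ht') (hAB.of_norm_bounded fun q ↦ hbound q t ht')

lemma integral_exp_mul_eq_integral_mul_cosh_of_even {f : ℝ → ℝ} (hf : f.Even) (a v : ℝ)
    (hfi : IntervalIntegrable f volume (-a) a) :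
    ∫ t in -a..a, Real.exp (v * t) * f t = ∫ t in -a..a, f t * Real.cosh (v * t) := by
  have hint (w : ℝ) : IntervalIntegrable (fun t ↦ Real.exp (w * t) * f t) volume (-a) a :=
    hfi.continuousOn_mul (by fun_prop)
  have hreflect : ∫ t in -a..a, Real.exp (-v * t) * f t = ∫ t in -a..a, Real.exp (v * t) * f t := by
    simpa only [hf _, neg_neg, mul_neg, neg_mul] using
      intervalIntegral.integral_comp_neg (a := -a) (b := a) fun t ↦ Real.exp (v * t) * f t
  calc ∫ t in -a..a, Real.exp (v * t) * f t
      = ((∫ t in -a..a, Real.exp (v * t) * f t) + ∫ t in -a..a, Real.exp (-v * t) * f t) / 2 := by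
        rw [hreflect, add_self_div_two]
    _ = ∫ t in -a..a, (Real.exp (v * t) * f t + Real.exp (-v * t) * f t) / 2 := by
        rw [intervalIntegral.integral_div, intervalIntegral.integral_add (hint v) (hint (-v))]
    _ = ∫ t in -a..a, f t * Real.cosh (v * t) := by
        congr 1 with t
        rw [Real.cosh_eq, neg_mul]
        ring

lemma integral_pow_mul_sq_sub_sq_pow (a : ℝ) (n k : ℕ) :
    ∫ t in -a..a, t ^ (2 * k) * (a ^ 2 - t ^ 2) ^ n =
      a ^ (2 * (n + k) + 1) *
        ((2 * k)! * 4 ^ (n + 1) * (n + k + 1)! * n ! / (k ! * (2 * (n + k) + 2)!)) := by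
  induction n generalizing k with
  | zero =>
    simp only [pow_zero, mul_one, integral_pow, Odd.neg_pow ⟨k, rfl⟩ a, zero_add, factorial_succ,
      factorial_zero]
    push_cast
    field_simp
    ring
  | succ n ih =>
    have hsplit (t : ℝ) : t ^ (2 * k) * (a ^ 2 - t ^ 2) ^ (n + 1) =
        a ^ 2 * (t ^ (2 * k) * (a ^ 2 - t ^ 2) ^ n) -
          t ^ (2 * (k + 1)) * (a ^ 2 - t ^ 2) ^ n := by ring
    have hint (c : ℝ) (j : ℕ) : IntervalIntegrable
        (fun t ↦ c * (t ^ j * (a ^ 2 - t ^ 2) ^ n)) volume (-a) a :=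
      Continuous.intervalIntegrable (by fun_prop) _ _
    simp only [hsplit]
    rw [intervalIntegral.integral_sub (hint _ _) (by simpa only [one_mul] using hint 1 _),
      intervalIntegral.integral_const_mul, ih, ih,
      show n + 1 + k = n + k + 1 by ring, ← add_assoc n k 1]
    simp only [mul_add, mul_one, factorial_succ]
    push_cast
    field_simp
    ring

/-- The Bessel–Clifford function of integer order `ν`, in terms of which the continuous binomial
coefficient is expressed. For `z ≠ 0`, `besselClifford ν (z ^ 2 / 4)` is `(2 / z) ^ ν * I_ν(z)`;
being entire in `y`, it spares the square roots and the division by zero that `I_ν` would bring. -/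
noncomputable def besselClifford (ν : ℕ) (y : ℝ) : ℝ :=
  ∑' n : ℕ, y ^ n / (n ! * (n + ν)!)

namespace besselClifford

lemma abs_term_le {ν n : ℕ} {r y : ℝ} (hy : |y| ≤ r) :
    |y ^ n / (n ! * (n + ν)!)| ≤ r ^ n / n ! := by
  have hone : (1 : ℝ) ≤ (n + ν)! := mod_cast (n + ν).factorial_pos
  have hr : 0 ≤ r := (abs_nonneg y).trans hy
  rw [abs_div, abs_pow, abs_of_pos (a := (n ! * (n + ν)! : ℝ)) (by positivity)]
  gcongr
  exact le_mul_of_one_le_right (by positivity) hone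

lemma hasSum (ν : ℕ) (y : ℝ) :
    HasSum (fun n : ℕ ↦ y ^ n / (n ! * (n + ν)!)) (besselClifford ν y) :=
  ((Real.summable_pow_div_factorial |y|).of_norm_bounded fun _ ↦ abs_term_le le_rfl).hasSum

lemma continuous (ν : ℕ) : Continuous (besselClifford ν) := by
  rw [continuous_iff_continuousAt]
  intro y
  have hcont : ContinuousOn (besselClifford ν) (Metric.closedBall 0 (|y| + 1)) :=
    continuousOn_tsum (fun n ↦ by fun_prop) (Real.summable_pow_div_factorial (|y| + 1))
      fun n z hz ↦ abs_term_le (by simpa using hz)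
  exact hcont.continuousAt (Metric.closedBall_mem_nhds_of_mem (by simp))

lemma integral_term_mul_cosh_term (ν : ℕ) (a v : ℝ) (n k : ℕ) :
    ∫ t in -a..a, (a ^ 2 - t ^ 2) ^ n / (n ! * (n + ν)!) * ((v * t) ^ (2 * k) / (2 * k)!) =
      a ^ (2 * (n + k) + 1) * (4 ^ (n + 1) * (v ^ 2) ^ k * (n + k + 1)! /
        (k ! * (n + ν)! * (2 * (n + k) + 2)!)) := by
  have hterm (t : ℝ) : (a ^ 2 - t ^ 2) ^ n / (n ! * (n + ν)!) * ((v * t) ^ (2 * k) / (2 * k)!) =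
      (v ^ 2) ^ k / (n ! * (n + ν)! * (2 * k)!) * (t ^ (2 * k) * (a ^ 2 - t ^ 2) ^ n) := by
    rw [mul_pow, pow_mul v]
    ring
  simp only [hterm]
  rw [intervalIntegral.integral_const_mul, integral_pow_mul_sq_sub_sq_pow]
  field_simp

lemma hasSum_integral_mul_cosh (ν : ℕ) (a v : ℝ) :
    HasSum (fun q : ℕ × ℕ ↦ a ^ (2 * (q.1 + q.2) + 1) *
        (4 ^ (q.1 + 1) * (v ^ 2) ^ q.2 * (q.1 + q.2 + 1)! /
          (q.2 ! * (q.1 + ν)! * (2 * (q.1 + q.2) + 2)!)))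
      (∫ t in -a..a, besselClifford ν (a ^ 2 - t ^ 2) * Real.cosh (v * t)) := by
  have hsq {t : ℝ} (ht : t ∈ Set.uIcc (-a) a) : t ^ 2 ≤ a ^ 2 := by
    rcases Set.mem_uIcc.mp ht with h | h <;> nlinarith
  have hbessel (n : ℕ) (t : ℝ) (ht : t ∈ Set.uIcc (-a) a) :
      |(a ^ 2 - t ^ 2) ^ n / (n ! * (n + ν)!)| ≤ (a ^ 2) ^ n / n ! := by
    apply abs_term_le
    rw [abs_of_nonneg (sub_nonneg.mpr (hsq ht))]
    exact sub_le_self _ (sq_nonneg t)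
  have hcosh (k : ℕ) (t : ℝ) (ht : t ∈ Set.uIcc (-a) a) :
      |(v * t) ^ (2 * k) / (2 * k)!| ≤ (v * a) ^ (2 * k) / (2 * k)! := by
    have := hsq ht
    simp only [pow_mul, mul_pow v]
    rw [abs_of_nonneg (by positivity)]
    gcongr
  have hseries := hasSum_intervalIntegral_mul (fun n ↦ by fun_prop) (fun k ↦ by fun_prop)
    hbessel hcosh (Real.summable_pow_div_factorial _) (Real.hasSum_cosh _).summable
    (fun t _ ↦ hasSum ν (a ^ 2 - t ^ 2)) (fun t _ ↦ Real.hasSum_cosh (v * t))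
  simpa only [integral_term_mul_cosh_term] using hseries

lemma integral_order_zero_mul_cosh {v r : ℝ} (a : ℝ) (hr : r ^ 2 = 4 + v ^ 2) :
    ∫ t in -a..a, besselClifford 0 (a ^ 2 - t ^ 2) * Real.cosh (v * t) =
      2 / r * Real.sinh (a * r) := by
  have hr0 : r ≠ 0 := by
    rintro rfl
    nlinarith [sq_nonneg v]
  refine (hasSum_sum_antidiagonal (hasSum_integral_mul_cosh 0 a v)).unique <|
    ((Real.hasSum_sinh (a * r)).mul_left (2 / r)).congr_fun fun N ↦ ?_
  calc ∑ q ∈ antidiagonal N, a ^ (2 * (q.1 + q.2) + 1) *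
        (4 ^ (q.1 + 1) * (v ^ 2) ^ q.2 * (q.1 + q.2 + 1)! /
          (q.2 ! * (q.1 + 0)! * (2 * (q.1 + q.2) + 2)!))
      = ∑ q ∈ antidiagonal N, 2 * (a ^ (2 * N + 1) / (2 * N + 1)!) *
          (N.choose q.1 • (4 ^ q.1 * (v ^ 2) ^ q.2)) := by
        refine sum_congr rfl fun ⟨n, k⟩ hq ↦ ?_
        obtain rfl : n + k = N := mem_antidiagonal.mp hq
        rw [nsmul_eq_mul, cast_add_choose, add_zero, factorial_succ (n + k),
          factorial_succ (2 * (n + k) + 1)]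
        push_cast
        field_simp
        ring
    _ = 2 * (a ^ (2 * N + 1) / (2 * N + 1)!) * (r ^ 2) ^ N := by
        rw [← mul_sum, ← (Commute.all _ _).add_pow', hr]
    _ = 2 / r * ((a * r) ^ (2 * N + 1) / (2 * N + 1)!) := by
        field_simp
        ring

lemma mul_integral_order_one_mul_cosh {v r : ℝ} (a : ℝ) (hr : r ^ 2 = 4 + v ^ 2) :
    a * ∫ t in -a..a, besselClifford 1 (a ^ 2 - t ^ 2) * Real.cosh (v * t) =
      Real.cosh (a * r) - Real.cosh (a * v) := by
  have hcosh : HasSum (fun N : ℕ ↦ (a * r) ^ (2 * (N + 1)) / (2 * (N + 1))! -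
      (a * v) ^ (2 * (N + 1)) / (2 * (N + 1))!) (Real.cosh (a * r) - Real.cosh (a * v)) := by
    simpa using (hasSum_nat_add_iff' 1).mpr
      ((Real.hasSum_cosh (a * r)).sub (Real.hasSum_cosh (a * v)))
  refine ((hasSum_sum_antidiagonal (hasSum_integral_mul_cosh 1 a v)).mul_left a).unique <|
    hcosh.congr_fun fun N ↦ ?_
  calc a * ∑ q ∈ antidiagonal N, a ^ (2 * (q.1 + q.2) + 1) *
        (4 ^ (q.1 + 1) * (v ^ 2) ^ q.2 * (q.1 + q.2 + 1)! /
          (q.2 ! * (q.1 + 1)! * (2 * (q.1 + q.2) + 2)!))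
      = a * ∑ q ∈ antidiagonal N, a ^ (2 * N + 1) / (2 * N + 2)! *
          ((N + 1).choose (q.1 + 1) * (4 ^ (q.1 + 1) * (v ^ 2) ^ q.2)) := by
        congr 1
        refine sum_congr rfl fun ⟨n, k⟩ hq ↦ ?_
        obtain rfl : n + k = N := mem_antidiagonal.mp hq
        rw [show n + k + 1 = n + 1 + k by ring, cast_add_choose]
        field_simp
    _ = a ^ (2 * (N + 1)) / (2 * (N + 1))! * ((r ^ 2) ^ (N + 1) - (v ^ 2) ^ (N + 1)) := by
        rw [← mul_sum, sum_antidiagonal_choose_succ_mul_pow, hr, mul_add, mul_one]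
        ring
    _ = _ := by
        ring

end besselClifford

lemma cbinom_eq_besselClifford (x s : ℝ) :
    cbinom x s = 2 * besselClifford 0 (s * (x - s)) + x * besselClifford 1 (s * (x - s)) := by
  have hsum := ((besselClifford.hasSum 0 (s * (x - s))).mul_left 2).add
    ((besselClifford.hasSum 1 (s * (x - s))).mul_left x)
  refine (hsum.congr_fun fun n ↦ ?_).tsum_eq
  rw [add_zero]
  ring

lemma integral_cbinom_mul_cosh {v r : ℝ} (x : ℝ) (hr : r ^ 2 = 4 + v ^ 2) :
    ∫ t in -(x / 2)..x / 2, cbinom x (t + x / 2) * Real.cosh (v * t) =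
      2 * (Real.cosh (x / 2 * r) - Real.cosh (x / 2 * v) + 2 / r * Real.sinh (x / 2 * r)) := by
  have hint (c : ℝ) (ν : ℕ) : IntervalIntegrable
      (fun t ↦ c * (besselClifford ν ((x / 2) ^ 2 - t ^ 2) * Real.cosh (v * t)))
      volume (-(x / 2)) (x / 2) := by
    have := besselClifford.continuous ν
    exact Continuous.intervalIntegrable (by fun_prop) _ _
  have hsplit (t : ℝ) : cbinom x (t + x / 2) * Real.cosh (v * t) =
      2 * (besselClifford 0 ((x / 2) ^ 2 - t ^ 2) * Real.cosh (v * t)) +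
        x * (besselClifford 1 ((x / 2) ^ 2 - t ^ 2) * Real.cosh (v * t)) := by
    rw [cbinom_eq_besselClifford,
      show (t + x / 2) * (x - (t + x / 2)) = (x / 2) ^ 2 - t ^ 2 by ring]
    ring
  simp only [hsplit]
  rw [intervalIntegral.integral_add (hint _ _) (hint _ _), intervalIntegral.integral_const_mul,
    intervalIntegral.integral_const_mul, besselClifford.integral_order_zero_mul_cosh _ hr]
  linear_combination 2 * besselClifford.mul_integral_order_one_mul_cosh (x / 2) hr

lemma continuous_cbinom (x : ℝ) : Continuous (cbinom x) := by
  have h0 := besselClifford.continuous 0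
  have h1 := besselClifford.continuous 1
  simp only [funext (cbinom_eq_besselClifford x)]
  fun_prop

lemma integral_exp_mul_cbinom {v r : ℝ} (x : ℝ) (hr : r ^ 2 = 4 + v ^ 2) :
    ∫ s in 0..x, Real.exp (v * s) * cbinom x s = 2 * Real.exp (v * x / 2) *
      (Real.cosh (x / 2 * r) - Real.cosh (x / 2 * v) + 2 / r * Real.sinh (x / 2 * r)) := by
  have heven : (fun t ↦ cbinom x (t + x / 2)).Even := fun t ↦ by
    simp only [cbinom]
    ring_nf
  have hcont : Continuous fun t ↦ cbinom x (t + x / 2) :=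
    (continuous_cbinom x).comp (by fun_prop)
  calc ∫ s in 0..x, Real.exp (v * s) * cbinom x s
      = ∫ t in -(x / 2)..x / 2, Real.exp (v * (t + x / 2)) * cbinom x (t + x / 2) := by
        rw [intervalIntegral.integral_comp_add_right fun s ↦ Real.exp (v * s) * cbinom x s,
          neg_add_cancel, add_halves]
    _ = Real.exp (v * x / 2) *
          ∫ t in -(x / 2)..x / 2, Real.exp (v * t) * cbinom x (t + x / 2) := by
        rw [← intervalIntegral.integral_const_mul]
        congr 1 with t
        rw [← mul_assoc, ← Real.exp_add]
        ring_nf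
    _ = _ := by
        rw [integral_exp_mul_eq_integral_mul_cosh_of_even heven _ _ (hcont.intervalIntegrable _ _),
          integral_cbinom_mul_cosh x hr]
        ring

lemma exp_mul_rpow_mul_rpow_sub {p q : ℝ} (hp : 0 < p) (hq : 0 < q) (x u s : ℝ) :
    Real.exp (u * s) * p ^ s * q ^ (x - s) = q ^ x * Real.exp ((u + Real.log (p / q)) * s) := by
  simp only [Real.rpow_def_of_pos hp, Real.rpow_def_of_pos hq, Real.log_div hp.ne' hq.ne',
    ← Real.exp_add]
  ring_nf

lemma integral_exp_mul_cbinom_mul_rpow {p : ℝ} (hp : 0 < p) (hp1 : p < 1) (x u : ℝ) :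
    ∫ s in 0..x, Real.exp (u * s) * cbinom x s * p ^ s * (1 - p) ^ (x - s) =
      2 * (1 - p) ^ x * Real.exp (Real.log (p / (1 - p)) * x / 2) *
        (Real.exp (u * x / 2) * phiCB x p u) := by
  have hexp (s : ℝ) : Real.exp (u * s) * cbinom x s * p ^ s * (1 - p) ^ (x - s) =
      (1 - p) ^ x * (Real.exp ((u + Real.log (p / (1 - p))) * s) * cbinom x s) := by
    linear_combination cbinom x s * exp_mul_rpow_mul_rpow_sub hp (sub_pos.mpr hp1) x u s
  simp only [hexp]
  rw [intervalIntegral.integral_const_mul,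
    integral_exp_mul_cbinom x (Real.sq_sqrt (by positivity)), phiCB,
    show (u + Real.log (p / (1 - p))) * x / 2 =
      Real.log (p / (1 - p)) * x / 2 + u * x / 2 by ring, Real.exp_add]
  ring

theorem cbinom_mgf_general {p : ℝ} (hp : 0 < p) (hp1 : p < 1) (x u : ℝ) :
    (∫ s in 0..x, Real.exp (u * s) * cbinom x s * p ^ s * (1 - p) ^ (x - s)) /
        (∫ s in 0..x, cbinom x s * p ^ s * (1 - p) ^ (x - s)) =
      Real.exp (u * x / 2) * (phiCB x p u / phiCB x p 0) := by
  have hmass : ∫ s in 0..x, cbinom x s * p ^ s * (1 - p) ^ (x - s) =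
      2 * (1 - p) ^ x * Real.exp (Real.log (p / (1 - p)) * x / 2) * phiCB x p 0 := by
    simpa using integral_exp_mul_cbinom_mul_rpow hp hp1 x 0
  have hfactor : 0 < 2 * (1 - p) ^ x * Real.exp (Real.log (p / (1 - p)) * x / 2) :=
    mul_pos (mul_pos two_pos (Real.rpow_pos_of_pos (sub_pos.mpr hp1) x)) (Real.exp_pos _)
  rw [hmass, integral_exp_mul_cbinom_mul_rpow hp hp1, mul_div_mul_left _ _ hfactor.ne',
    mul_div_assoc]

theorem cbinom_mgf (x p u : ℝ) (hx : 0 ≤ x) (hp : 0 < p) (hp1 : p < 1) :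
    (∫ s in (0 : ℝ)..x, Real.exp (u * s) * cbinom x s * p ^ s * (1 - p) ^ (x - s)) /
        (∫ s in (0 : ℝ)..x, cbinom x s * p ^ s * (1 - p) ^ (x - s)) =
      Real.exp (u * x / 2) * (phiCB x p u / phiCB x p 0) :=
  cbinom_mgf_general hp hp1 x u
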